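/- Let U ⊆ ℝⁿ be open, let D be a torsion-free affine connection on U with smooth Christoffel symbols Γ_{ij}^k, and let μ ∈ ℝ. Let X = (X¹,…,Xⁿ) be a smooth vector field on U which is affine Killing, i.e. ∂_i∂_j X^k + Σ_l ( X^l ∂_l Γ_{ij}^k − Γ_{ij}^l ∂_l X^k + Γ_{lj}^k ∂_i X^l + Γ_{il}^k ∂_j X^l ) = 0 on U for all i,j,k. If h : U → ℝ is a smooth solution of the affine quasi-Einstein equation ∂_i∂_j h − Σ_k Γ_{ij}^k ∂_k h = μ h (ρ_s)_{ij}, then the function Xh := Σ_l X^l ∂_l h is also a smooth solution of the same equation on U. -/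

import Mathlib

/-!
The flow of an affine Killing field `X` preserves the connection, hence also everything naturally
built from it, and the quasi-Einstein equation is such a natural equation. Infinitesimally, writing
`L` for the Lie derivative along `X`, this amounts to two identities:

* `Hess (Xh) = L (Hess h)`, because the difference of the two sides is the contraction of `dh` with
  the Killing tensor `L Γ = 0` (`hess_algebra`);
* `L ρ = 0` (`ricci_algebra`).

For the second one, collect the Christoffel symbols in matrices `A_i = (Γ_{ij}^k)_{jk}` and put
`J = (∂_j X^k)_{jk}`. The Killing equation becomes
`K_i := ∂_i J + X(A_i) + ∑ ∂_i X^l A_l + J A_i - A_i J = 0`, and the curvature is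
`R_{ki} = ∂_k A_i - ∂_i A_k + A_i A_k - A_k A_i`. In the antisymmetrised derivative
`∂_k K_i - ∂_i K_k` the second derivatives of `J` cancel; adding the commutators
`[A_i, K_k] - [A_k, K_i]` gives precisely `L R_{ki}`, so `L R = 0` (`curvature_algebra`).
As `ρ_{ij} = ∑_k (R_{ki})_{jk}` is a contraction, `L ρ = 0` follows.

Applying `L` to `Hess h = μ h ρ_s` now gives `Hess (Xh) = μ (Xh) ρ_s`. All identities are
proved pointwise for the jets of `Γ`, `X` and `h`, which are supplied by differentiating
the Killing and quasi-Einstein equations on the open set `U`.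
-/

open scoped ContDiff

/-- Partial derivative `∂_i f` in coordinates on `ℝⁿ`. -/
noncomputable def pd {n : ℕ} (i : Fin n) (f : (Fin n → ℝ) → ℝ) : (Fin n → ℝ) → ℝ :=
  fun x => fderiv ℝ f x (Pi.single i 1)

/-- Hessian `(Hess_h)_{ij} = ∂_i∂_j h − Σ_k Γ_{ij}^k ∂_k h` of `h` w.r.t. the connection `Γ`. -/
noncomputable def hessD {n : ℕ} (Γ : Fin n → Fin n → Fin n → (Fin n → ℝ) → ℝ)
    (h : (Fin n → ℝ) → ℝ) (i j : Fin n) : (Fin n → ℝ) → ℝ :=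
  fun x => pd i (pd j h) x - ∑ k, Γ i j k x * pd k h x

/-- Ricci tensor
`ρ_{ij} = Σ_k (∂_k Γ_{ij}^k − ∂_i Γ_{kj}^k) + Σ_{k,l} (Γ_{kl}^k Γ_{ij}^l − Γ_{il}^k Γ_{kj}^l)`. -/
noncomputable def ricciD {n : ℕ} (Γ : Fin n → Fin n → Fin n → (Fin n → ℝ) → ℝ)
    (i j : Fin n) : (Fin n → ℝ) → ℝ :=
  fun x => (∑ k, (pd k (Γ i j k) x - pd i (Γ k j k) x))
    + ∑ k, ∑ l, (Γ k l k x * Γ i j l x - Γ i l k x * Γ k j l x)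

/-- Symmetrized Ricci tensor `(ρ_s)_{ij} = (ρ_{ij} + ρ_{ji})/2`. -/
noncomputable def ricciSymD {n : ℕ} (Γ : Fin n → Fin n → Fin n → (Fin n → ℝ) → ℝ)
    (i j : Fin n) : (Fin n → ℝ) → ℝ :=
  fun x => (ricciD Γ i j x + ricciD Γ j i x) / 2

/-! ### Calculus of partial derivatives on an open set -/

lemma contDiffOn_pd {n : ℕ} {U : Set (Fin n → ℝ)} (hU : IsOpen U) (i : Fin n)
    {f : (Fin n → ℝ) → ℝ} (hf : ContDiffOn ℝ ∞ f U) : ContDiffOn ℝ ∞ (pd i f) U := by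
  have h1 : ContDiffOn ℝ ∞ (fderiv ℝ f) U := hf.fderiv_of_isOpen hU (by simp)
  exact h1.clm_apply contDiffOn_const

lemma pd_congr {n : ℕ} {U : Set (Fin n → ℝ)} (hU : IsOpen U) (i : Fin n)
    {f g : (Fin n → ℝ) → ℝ} (hfg : ∀ x ∈ U, f x = g x) {x : Fin n → ℝ} (hx : x ∈ U) :
    pd i f x = pd i g x := by
  have : f =ᶠ[nhds x] g := Filter.eventually_of_mem (hU.mem_nhds hx) hfg
  simp only [pd, this.fderiv_eq]

lemma pd_comm {n : ℕ} {U : Set (Fin n → ℝ)} (hU : IsOpen U) (i j : Fin n)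
    {f : (Fin n → ℝ) → ℝ} (hf : ContDiffOn ℝ ∞ f U) {x : Fin n → ℝ} (hx : x ∈ U) :
    pd i (pd j f) x = pd j (pd i f) x := by
  have hfx : ContDiffAt ℝ ∞ f x := hf.contDiffAt (hU.mem_nhds hx)
  have hs : IsSymmSndFDerivAt ℝ f x := hfx.isSymmSndFDerivAt (by
    rw [minSmoothness_of_isRCLikeNormedField]; exact WithTop.coe_le_coe.2 le_top)
  have hd : DifferentiableAt ℝ (fderiv ℝ f) x :=
    ((hf.fderiv_of_isOpen (m := ∞) hU (by simp)).contDiffAt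
      (hU.mem_nhds hx)).differentiableAt (by simp)
  have key : ∀ a b : Fin n, pd a (pd b f) x
      = fderiv ℝ (fderiv ℝ f) x (Pi.single a 1) (Pi.single b 1) := by
    intro a b
    unfold pd
    rw [fderiv_clm_apply hd (differentiableAt_const _)]
    simp
  rw [key, key]
  exact hs _ _

/-- `f` is smooth on `U` and its `i`-th partial derivative on `U` is `g`. Carrying smoothness
along lets the rules of differentiation be composed without side conditions. -/
def HasPdOn {n : ℕ} (U : Set (Fin n → ℝ)) (i : Fin n) (f g : (Fin n → ℝ) → ℝ) : Prop :=
  ContDiffOn ℝ ∞ f U ∧ ∀ x ∈ U, DifferentiableAt ℝ f x ∧ pd i f x = g x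

namespace HasPdOn

variable {n : ℕ} {U : Set (Fin n → ℝ)} {i : Fin n} {f g f' g' : (Fin n → ℝ) → ℝ}

lemma base (hU : IsOpen U) (i : Fin n) (hf : ContDiffOn ℝ ∞ f U) : HasPdOn U i f (pd i f) :=
  ⟨hf, fun _ hx => ⟨(hf.contDiffAt (hU.mem_nhds hx)).differentiableAt (by simp), rfl⟩⟩

lemma const (c : ℝ) : HasPdOn U i (fun _ => c) (fun _ => 0) :=
  ⟨contDiffOn_const, fun _ _ => ⟨differentiableAt_const _, by simp [pd]⟩⟩

lemma add (hf : HasPdOn U i f f') (hg : HasPdOn U i g g') :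
    HasPdOn U i (fun x => f x + g x) (fun x => f' x + g' x) :=
  ⟨hf.1.add hg.1, fun x hx => ⟨(hf.2 x hx).1.add (hg.2 x hx).1, by
    beta_reduce
    rw [← (hf.2 x hx).2, ← (hg.2 x hx).2]
    simp only [pd]
    rw [fderiv_fun_add (hf.2 x hx).1 (hg.2 x hx).1]; rfl⟩⟩

lemma sub (hf : HasPdOn U i f f') (hg : HasPdOn U i g g') :
    HasPdOn U i (fun x => f x - g x) (fun x => f' x - g' x) :=
  ⟨hf.1.sub hg.1, fun x hx => ⟨(hf.2 x hx).1.sub (hg.2 x hx).1, by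
    beta_reduce
    rw [← (hf.2 x hx).2, ← (hg.2 x hx).2]
    simp only [pd]
    rw [fderiv_fun_sub (hf.2 x hx).1 (hg.2 x hx).1]; rfl⟩⟩

lemma mul (hf : HasPdOn U i f f') (hg : HasPdOn U i g g') :
    HasPdOn U i (fun x => f x * g x) (fun x => f' x * g x + f x * g' x) :=
  ⟨hf.1.mul hg.1, fun x hx => ⟨(hf.2 x hx).1.mul (hg.2 x hx).1, by
    beta_reduce
    rw [← (hf.2 x hx).2, ← (hg.2 x hx).2]
    simp only [pd]
    rw [fderiv_fun_mul (hf.2 x hx).1 (hg.2 x hx).1]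
    simp; ring⟩⟩

lemma sum {ι : Type*} [Fintype ι] {F F' : ι → (Fin n → ℝ) → ℝ}
    (hF : ∀ k, HasPdOn U i (F k) (F' k)) :
    HasPdOn U i (fun x => ∑ k, F k x) (fun x => ∑ k, F' k x) :=
  ⟨ContDiffOn.sum fun k _ => (hF k).1, fun x hx =>
    ⟨DifferentiableAt.fun_sum fun k _ => ((hF k).2 x hx).1, by
      simp only [pd]
      rw [fderiv_fun_sum fun k _ => ((hF k).2 x hx).1, sum_apply]
      exact Finset.sum_congr rfl fun k _ => ((hF k).2 x hx).2⟩⟩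

lemma eq (hf : HasPdOn U i f f') {x : Fin n → ℝ} (hx : x ∈ U) : pd i f x = f' x :=
  (hf.2 x hx).2

end HasPdOn

/-! ### Pointwise tensor algebra -/

/-- `L_X R = 0` in matrix form. Here `A i`, `D m i`, `DD m p i` stand for `A_i`, `∂_m A_i`,
`∂_m ∂_p A_i`, and `J`, `DJ m`, `DDJ m p` for `J`, `∂_m J`, `∂_m ∂_p J`; the hypotheses `hK`, `hdK`
are the Killing equation and its first derivative. -/
lemma curvature_algebra {n : ℕ} (A : Fin n → Matrix (Fin n) (Fin n) ℝ)
    (D : Fin n → Fin n → Matrix (Fin n) (Fin n) ℝ)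
    (DD : Fin n → Fin n → Fin n → Matrix (Fin n) (Fin n) ℝ)
    (x : Fin n → ℝ) (J : Matrix (Fin n) (Fin n) ℝ)
    (DJ : Fin n → Matrix (Fin n) (Fin n) ℝ) (DDJ : Fin n → Fin n → Matrix (Fin n) (Fin n) ℝ)
    (hDD : ∀ m p i, DD m p i = DD p m i) (hDJ : ∀ i j k, DJ i j k = DJ j i k)
    (hDDJ : ∀ m p, DDJ m p = DDJ p m)
    (hK : ∀ i, DJ i + ∑ l, x l • D l i - A i * J + ∑ l, J i l • A l + J * A i = 0)
    (hdK : ∀ m i, DDJ m i + (∑ l, J m l • D l i + ∑ l, x l • DD m l i)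
      - (D m i * J + A i * DJ m) + (∑ l, J i l • D m l + ∑ l, DJ m i l • A l)
      + (DJ m * A i + J * D m i) = 0) (k i : Fin n) :
    ∑ l, x l • (DD l k i - DD l i k + (D l i * A k + A i * D l k) - (D l k * A i + A k * D l i))
      + ∑ l, J k l • (D l i - D i l + A i * A l - A l * A i)
      + ∑ l, J i l • (D k l - D l k + A l * A k - A k * A l)
      + J * (D k i - D i k + A i * A k - A k * A i)
      - (D k i - D i k + A i * A k - A k * A i) * J = 0 := by
  have e1 := hdK k i
  have e2 := hdK i k
  have e3 := hK k
  have e4 := hK i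
  rw [hDDJ i k] at e2
  simp only [hDJ i k] at e2
  simp only [hDD _ k i, hDD _ i k, smul_add, smul_sub, Finset.sum_add_distrib,
    Finset.sum_sub_distrib, ← smul_mul_assoc, ← Finset.sum_mul]
  simp only [smul_mul_assoc, ← mul_smul_comm, ← Finset.mul_sum]
  have c : ∀ (P Q R S T V : Matrix (Fin n) (Fin n) ℝ), P = 0 → Q = 0 → R = 0 → S = 0 →
      P - Q + (T * R - R * T) - (V * S - S * V) = 0 := by
    rintro P Q R S T V rfl rfl rfl rfl; simp
  rw [← c _ _ _ _ (A i) (A k) e1 e2 e3 e4]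
  noncomm_ring

/-- `L_X ρ = 0`, for the jets `G`, `dG`, `ddG` of `Γ` and `x`, `J`, `dJ`, `ddJ` of `X` at a point,
the leading indices being those of the derivatives (`J i k = ∂_i X^k`). -/
lemma ricci_algebra {n : ℕ} (G : Fin n → Fin n → Fin n → ℝ)
    (dG : Fin n → Fin n → Fin n → Fin n → ℝ) (ddG : Fin n → Fin n → Fin n → Fin n → Fin n → ℝ)
    (x : Fin n → ℝ) (J : Fin n → Fin n → ℝ) (dJ : Fin n → Fin n → Fin n → ℝ)
    (ddJ : Fin n → Fin n → Fin n → Fin n → ℝ)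
    (hddG : ∀ m p i j k, ddG m p i j k = ddG p m i j k) (hdJ : ∀ i j k, dJ i j k = dJ j i k)
    (hddJ : ∀ m p j k, ddJ m p j k = ddJ p m j k)
    (hK : ∀ i j k, dJ i j k + ∑ l, (x l * dG l i j k - G i j l * J l k
      + G l j k * J i l + G i l k * J j l) = 0)
    (hdK : ∀ m i j k, ddJ m i j k + ∑ l, ((J m l * dG l i j k + x l * ddG m l i j k)
      - (dG m i j l * J l k + G i j l * dJ m l k)
      + (dG m l j k * J i l + G l j k * dJ m i l)
      + (dG m i l k * J j l + G i l k * dJ m j l)) = 0)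
    (r : Fin n → Fin n → ℝ) (dr : Fin n → Fin n → Fin n → ℝ)
    (hr : ∀ i j, r i j = (∑ k, (dG k i j k - dG i k j k))
      + ∑ k, ∑ l, (G k l k * G i j l - G i l k * G k j l))
    (hdr : ∀ m i j, dr m i j = (∑ k, (ddG m k i j k - ddG m i k j k))
      + ∑ k, ∑ l, ((dG m k l k * G i j l + G k l k * dG m i j l)
        - (dG m i l k * G k j l + G i l k * dG m k j l)))
    (i j : Fin n) :
    ∑ l, (x l * dr l i j + J i l * r l j + J j l * r i l) = 0 := by
  have key := fun k => curvature_algebra (fun i => Matrix.of (G i))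
    (fun m i => Matrix.of (dG m i)) (fun m p i => Matrix.of (ddG m p i)) x (Matrix.of J)
    (fun m => Matrix.of (dJ m)) (fun m p => Matrix.of (ddJ m p))
    (fun m p i => by ext j k; exact hddG m p i j k) hdJ
    (fun m p => by ext j k; exact hddJ m p j k)
    (fun i => by
      ext j k
      rw [Matrix.zero_apply, ← hK i j k]
      simp only [Matrix.add_apply, Matrix.sub_apply, Matrix.sum_apply, Matrix.smul_apply,
        Matrix.mul_apply, Matrix.of_apply, smul_eq_mul, Finset.sum_add_distrib,
        Finset.sum_sub_distrib, mul_comm]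
      ring)
    (fun m i => by
      ext j k
      rw [Matrix.zero_apply, ← hdK m i j k]
      simp only [Matrix.add_apply, Matrix.sub_apply, Matrix.sum_apply, Matrix.smul_apply,
        Matrix.mul_apply, Matrix.of_apply, smul_eq_mul, Finset.sum_add_distrib,
        Finset.sum_sub_distrib, mul_comm]
      ring) k i
  -- The curvature matrices and their first derivatives; the Ricci tensor is their contraction.
  set R : Fin n → Fin n → Matrix (Fin n) (Fin n) ℝ := fun k i =>
    Matrix.of (dG k i) - Matrix.of (dG i k) + Matrix.of (G i) * Matrix.of (G k)
      - Matrix.of (G k) * Matrix.of (G i) with hR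
  set dR : Fin n → Fin n → Fin n → Matrix (Fin n) (Fin n) ℝ := fun l k i =>
    Matrix.of (ddG l k i) - Matrix.of (ddG l i k)
      + (Matrix.of (dG l i) * Matrix.of (G k) + Matrix.of (G i) * Matrix.of (dG l k))
      - (Matrix.of (dG l k) * Matrix.of (G i) + Matrix.of (G k) * Matrix.of (dG l i)) with hdR
  have r1 : ∀ i j, r i j = ∑ k, R k i j k := by
    intro i j
    rw [hr, ← Finset.sum_add_distrib]
    refine Finset.sum_congr rfl fun k _ => ?_
    simp only [hR, Matrix.add_apply, Matrix.sub_apply, Matrix.mul_apply, Matrix.of_apply,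
      Finset.sum_sub_distrib, mul_comm]
    ring
  have r2 : ∀ m i j, dr m i j = ∑ k, dR m k i j k := by
    intro m i j
    rw [hdr, ← Finset.sum_add_distrib]
    refine Finset.sum_congr rfl fun k _ => ?_
    simp only [hdR, Matrix.add_apply, Matrix.sub_apply, Matrix.mul_apply, Matrix.of_apply,
      Finset.sum_sub_distrib, Finset.sum_add_distrib, mul_comm]
    ring
  have key2 : ∀ k, ∑ l, x l * dR l k i j k + ∑ l, J k l * R l i j k + ∑ l, J i l * R k l j k
      + ∑ l, J j l * R k i l k - ∑ l, R k i j l * J l k = 0 := by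
    intro k
    have := congrFun (congrFun (key k) j) k
    change (∑ l, x l • dR l k i + ∑ l, J k l • R l i + ∑ l, J i l • R k l
      + Matrix.of J * R k i - R k i * Matrix.of J) j k = 0 at this
    simpa only [Matrix.add_apply, Matrix.sub_apply, Matrix.sum_apply, Matrix.smul_apply,
      Matrix.mul_apply, Matrix.of_apply, smul_eq_mul] using this
  have key3 := Finset.sum_congr (rfl : (Finset.univ : Finset (Fin n)) = _) fun k _ => key2 k
  simp only [Finset.sum_add_distrib, Finset.sum_sub_distrib, Finset.sum_const_zero] at key3
  -- The contraction index of the trace is itself moved by `L_X`; its two contributions cancel.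
  have sw : ∑ k, ∑ l, R k i j l * J l k = ∑ k, ∑ l, J k l * R l i j k := by
    rw [Finset.sum_comm]
    simp only [mul_comm]
  rw [sw] at key3
  rw [Finset.sum_comm (f := fun k l => x l * dR l k i j k),
    Finset.sum_comm (f := fun k l => J i l * R k l j k),
    Finset.sum_comm (f := fun k l => J j l * R k i l k)] at key3
  simp only [← Finset.mul_sum] at key3
  simp only [← r1, ← r2] at key3
  simp only [Finset.sum_add_distrib]
  linarith

/-- `Hess (Xh) = L_X (Hess h)` at a point, for the jet `p`, `dp`, `ddp` of the differential of `h`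
(`p l = ∂_l h`) and those of `Γ`, `X` as in `ricci_algebra`. -/
lemma hess_algebra {n : ℕ} (G : Fin n → Fin n → Fin n → ℝ)
    (dG : Fin n → Fin n → Fin n → Fin n → ℝ)
    (x : Fin n → ℝ) (J : Fin n → Fin n → ℝ) (dJ : Fin n → Fin n → Fin n → ℝ)
    (p : Fin n → ℝ) (dp : Fin n → Fin n → ℝ) (ddp : Fin n → Fin n → Fin n → ℝ)
    (hdp : ∀ i j, dp i j = dp j i) (hddp : ∀ i j l, ddp i j l = ddp l i j)
    (hK : ∀ i j k, dJ i j k + ∑ l, (x l * dG l i j k - G i j l * J l k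
      + G l j k * J i l + G i l k * J j l) = 0) (i j : Fin n) :
    ∑ l, ((dJ i j l * p l + J j l * dp i l) + (J i l * dp j l + x l * ddp i j l))
      - ∑ k, G i j k * ∑ l, (J k l * p l + x l * dp k l)
    = ∑ l, (x l * (ddp l i j - ∑ k, (dG l i j k * p k + G i j k * dp l k))
        + J i l * (dp l j - ∑ k, G l j k * p k) + J j l * (dp i l - ∑ k, G i l k * p k)) := by
  have e : ∑ k, (dJ i j k + ∑ l, (x l * dG l i j k - G i j l * J l k
      + G l j k * J i l + G i l k * J j l)) * p k = 0 := by
    simp only [hK, zero_mul, Finset.sum_const_zero]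
  simp only [add_mul, sub_mul, mul_add, mul_sub, Finset.sum_mul, Finset.mul_sum,
    Finset.sum_add_distrib, Finset.sum_sub_distrib] at e ⊢
  rw [Finset.sum_comm (f := fun k l => x l * dG l i j k * p k),
    Finset.sum_comm (f := fun k l => G i j l * J l k * p k),
    Finset.sum_comm (f := fun k l => G l j k * J i l * p k),
    Finset.sum_comm (f := fun k l => G i l k * J j l * p k)] at e
  rw [Finset.sum_comm (f := fun k l => G i j k * (x l * dp k l))]
  have s1 : ∀ l, J i l * dp j l = J i l * dp l j := fun l => by rw [hdp]
  have s2 : ∀ l, x l * ddp i j l = x l * ddp l i j := fun l => by rw [hddp]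
  have s3 : ∀ l k, G i j k * (x l * dp k l) = x l * (G i j k * dp l k) :=
    fun l k => by rw [hdp]; ring
  have s4 : ∀ l k, x l * dG l i j k * p k = x l * (dG l i j k * p k) := fun l k => by ring
  have s5 : ∀ l k, G i j l * J l k * p k = G i j l * (J l k * p k) := fun l k => by ring
  have s6 : ∀ l k, G l j k * J i l * p k = J i l * (G l j k * p k) := fun l k => by ring
  have s7 : ∀ l k, G i l k * J j l * p k = J j l * (G i l k * p k) := fun l k => by ring
  simp only [s4, s5, s6, s7] at e
  simp only [s1, s2, s3]
  linarith

/-! ### The quasi-Einstein equation -/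

/-- if `X` is an affine Killing vector field and `h` solves the affine
quasi-Einstein equation, then `Xh = Σ_l X^l ∂_l h` also solves it. -/
theorem statement4 {n : ℕ} (U : Set (Fin n → ℝ)) (hU : IsOpen U)
    (Γ : Fin n → Fin n → Fin n → (Fin n → ℝ) → ℝ)
    (hΓ : ∀ i j k, ContDiffOn ℝ ∞ (Γ i j k) U)
    (hΓsym : ∀ i j k, Γ i j k = Γ j i k) (μ : ℝ)
    (X : Fin n → (Fin n → ℝ) → ℝ) (hX : ∀ l, ContDiffOn ℝ ∞ (X l) U)
    (hKilling : ∀ x ∈ U, ∀ i j k, pd i (pd j (X k)) x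
      + ∑ l, (X l x * pd l (Γ i j k) x - Γ i j l x * pd l (X k) x
        + Γ l j k x * pd i (X l) x + Γ i l k x * pd j (X l) x) = 0)
    (h : (Fin n → ℝ) → ℝ) (hh : ContDiffOn ℝ ∞ h U)
    (heq : ∀ x ∈ U, ∀ i j, hessD Γ h i j x = μ * h x * ricciSymD Γ i j x) :
    ContDiffOn ℝ ∞ (fun x => ∑ l, X l x * pd l h x) U ∧
    ∀ x ∈ U, ∀ i j, hessD Γ (fun y => ∑ l, X l y * pd l h y) i j x
      = μ * (∑ l, X l x * pd l h x) * ricciSymD Γ i j x := by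
  have bG := fun m i j k => HasPdOn.base hU m (hΓ i j k)
  have bdG := fun m p i j k => HasPdOn.base hU m (contDiffOn_pd hU p (hΓ i j k))
  have bX := fun m l => HasPdOn.base hU m (hX l)
  have bJ := fun m i l => HasPdOn.base hU m (contDiffOn_pd hU i (hX l))
  have bdJ := fun m i j l =>
    HasPdOn.base hU m (contDiffOn_pd hU i (contDiffOn_pd hU j (hX l)))
  have bh := fun m => HasPdOn.base hU m hh
  have bp := fun m l => HasPdOn.base hU m (contDiffOn_pd hU l hh)
  have bdp := fun m i l =>
    HasPdOn.base hU m (contDiffOn_pd hU i (contDiffOn_pd hU l hh))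
  have hXh := fun m => HasPdOn.sum (fun l => (bX m l).mul (bp m l))
  refine ⟨ContDiffOn.sum fun l _ => (hX l).mul (contDiffOn_pd hU l hh), fun x hx i j => ?_⟩
  have hric := fun m i j => (HasPdOn.sum (fun k => (bdG m k i j k).sub (bdG m i k j k))).add
    (HasPdOn.sum fun k => HasPdOn.sum fun l =>
      ((bG m k l k).mul (bG m i j l)).sub ((bG m i l k).mul (bG m k j l)))
  have hdK : ∀ m i j k, _ = (0 : ℝ) := fun m i j k =>
    (((bdJ m i j k).add (HasPdOn.sum fun l =>
      ((((bX m l).mul (bdG m l i j k)).sub ((bG m i j l).mul (bJ m l k))).add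
        ((bG m l j k).mul (bJ m i l))).add ((bG m i l k).mul (bJ m j l)))).eq hx).symm.trans
    ((pd_congr hU m (fun y hy => hKilling y hy i j k) hx).trans
      ((HasPdOn.const (0 : ℝ)).eq hx))
  -- The Lie derivative of the Ricci tensor vanishes.
  have hLr := ricci_algebra (fun i j k => Γ i j k x) (fun m i j k => pd m (Γ i j k) x)
    (fun m p i j k => pd m (pd p (Γ i j k)) x) (fun l => X l x) (fun i l => pd i (X l) x)
    (fun i j l => pd i (pd j (X l)) x) (fun m i j l => pd m (pd i (pd j (X l))) x)
    (fun m p i j k => pd_comm hU m p (hΓ i j k) hx) (fun i j k => pd_comm hU i j (hX k) hx)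
    (fun m p j k => pd_comm hU m p (contDiffOn_pd hU j (hX k)) hx)
    (hKilling x hx) hdK (fun i j => ricciD Γ i j x) (fun m i j => pd m (ricciD Γ i j) x)
    (fun i j => rfl) (fun m i j => (hric m i j).eq hx)
  have hLH := hess_algebra (fun i j k => Γ i j k x) (fun m i j k => pd m (Γ i j k) x)
    (fun l => X l x) (fun i l => pd i (X l) x) (fun i j l => pd i (pd j (X l)) x)
    (fun l => pd l h x) (fun i l => pd i (pd l h) x) (fun i j l => pd i (pd j (pd l h)) x)
    (fun i j => pd_comm hU i j hh hx)
    (fun i j l => (pd_congr hU i (fun y hy => pd_comm hU j l hh hy) hx).trans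
      (pd_comm hU i l (contDiffOn_pd hU j hh) hx))
    (hKilling x hx) i j
  have hpd2 : pd i (pd j (fun y => ∑ l, X l y * pd l h y)) x
      = ∑ l, ((pd i (pd j (X l)) x * pd l h x + pd j (X l) x * pd i (pd l h) x)
        + (pd i (X l) x * pd j (pd l h) x + X l x * pd i (pd j (pd l h)) x)) :=
    (pd_congr hU i (fun y hy => (hXh j).eq hy) hx).trans
      ((HasPdOn.sum fun l => ((bJ i j l).mul (bp i l)).add ((bX i l).mul (bdp i j l))).eq hx)
  have hpd1 : ∀ k, pd k (fun y => ∑ l, X l y * pd l h y) x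
      = ∑ l, (pd k (X l) x * pd l h x + X l x * pd k (pd l h) x) := fun k => (hXh k).eq hx
  have hdH : ∀ m, pd m (hessD Γ h i j) x = pd m (pd i (pd j h)) x
      - ∑ k, (pd m (Γ i j k) x * pd k h x + Γ i j k x * pd m (pd k h) x) := fun m =>
    ((bdp m i j).sub (HasPdOn.sum fun k => (bG m i j k).mul (bp m k))).eq hx
  have bric : ∀ m i j, HasPdOn U m (ricciD Γ i j) (pd m (ricciD Γ i j)) := fun m i j =>
    HasPdOn.base hU m (hric m i j).1
  have hdE : ∀ m, pd m (hessD Γ h i j) x = μ * pd m h x * ricciSymD Γ i j x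
      + μ * h x * ((pd m (ricciD Γ i j) x + pd m (ricciD Γ j i) x) / 2) := by
    intro m
    rw [pd_congr hU m (fun y hy => heq y hy i j) hx]
    have e := ((((HasPdOn.const μ).mul (bh m)).mul
      (((bric m i j).add (bric m j i)).mul (HasPdOn.const (2⁻¹ : ℝ))))).eq hx
    simp only [ricciSymD, div_eq_mul_inv]
    rw [e]
    ring
  have hH : ∀ a b, pd a (pd b h) x - ∑ k, Γ a b k x * pd k h x
      = μ * h x * ricciSymD Γ a b x := heq x hx
  simp only [hessD] at hLH ⊢
  rw [hpd2]
  simp only [hpd1]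
  rw [hLH]
  simp only [← hdH, hdE, hH]
  -- What remains is the Leibniz rule for `L_X (μ h ρ_s)` together with `L_X ρ = 0`.
  have l1 := hLr i j
  have l2 := hLr j i
  have l3 : μ * (∑ l, X l x * pd l h x) * ricciSymD Γ i j x
      = ∑ l, μ * (X l x * pd l h x) * ricciSymD Γ i j x := by
    rw [Finset.mul_sum, Finset.sum_mul]
  rw [l3, ← sub_eq_zero, ← Finset.sum_sub_distrib]
  have l4 : μ * h x / 2 * (∑ l, (X l x * pd l (ricciD Γ i j) x + pd i (X l) x * ricciD Γ l j x
        + pd j (X l) x * ricciD Γ i l x)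
      + ∑ l, (X l x * pd l (ricciD Γ j i) x + pd j (X l) x * ricciD Γ l i x
        + pd i (X l) x * ricciD Γ j l x)) = 0 := by
    rw [l1, l2]; simp
  rw [← l4, ← Finset.sum_add_distrib, Finset.mul_sum]
  refine Finset.sum_congr rfl fun l _ => ?_
  simp only [ricciSymD]
  ring
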